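/- Let a ∈ 𝔻 with a ≠ 0. If f ∈ H² satisfies f ∘ φ_a = −f and ⟨f, g⟩ = 0 for every g ∈ H² with g ∘ φ_a = g, then f = 0. That is, N(C_a + 1) ∩ N(C_a − 1)^⊥ = {0}. -/

import Mathlib

/-!
A function `f` with `f ∘ φ_a = -f` is tested against the `φ_a`-invariant functions
`1` and `g = (1 - conj w · a) k_w + (1 - conj a · z) k_u`, where `k_w(z) = 1 / (1 - conj w · z)` is the
reproducing kernel and `u = φ_a(w)`; the two summands of `g` are exchanged by `φ_a`, since
`(1 - conj w · a) (k_w ∘ φ_a) = (1 - conj a · z) k_u`. Orthogonality to `1` gives `f(0) = 0`.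
With `m = ⟨f, z k_u⟩`, so that `u m = f(u) - f(0) = f(u) = -f(w)`, orthogonality to `g` reads
`(1 - conj a · w) f(w) + f(u) - a m = 0`, that is `m (conj a · w u - a) = 0`. As `|w u| < 1`, the
second factor is nonzero, hence `m = 0` and `f(w) = -u m = 0`.
-/

/-- The Möbius involution `φ_a(z) = (a - z)/(1 - conj a · z)`. -/
noncomputable def phi (a z : ℂ) : ℂ := (a - z) / (1 - (starRingEnd ℂ) a * z)

/-- `f` belongs to the Hardy space `H²` of the disk, with Taylor coefficients `c`. -/
def IsH2Rep (f : ℂ → ℂ) (c : ℕ → ℂ) : Prop :=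
  Summable (fun n => ‖c n‖ ^ 2) ∧
    ∀ z : ℂ, ‖z‖ < 1 → HasSum (fun n => c n * z ^ n) (f z)

open ComplexConjugate

lemma one_sub_conj_mul_ne_zero {a z : ℂ} (ha : ‖a‖ < 1) (hz : ‖z‖ < 1) :
    1 - conj a * z ≠ 0 := by
  intro h
  have h1 : conj a * z = 1 := (sub_eq_zero.mp h).symm
  have h2 : ‖a‖ * ‖z‖ = 1 := by
    rw [← RCLike.norm_conj a, ← norm_mul, h1, norm_one]
  nlinarith [norm_nonneg a, norm_nonneg z]

lemma norm_phi_lt_one {a z : ℂ} (ha : ‖a‖ < 1) (hz : ‖z‖ < 1) : ‖phi a z‖ < 1 := by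
  have h0 := one_sub_conj_mul_ne_zero ha hz
  rw [phi, norm_div, div_lt_one (norm_pos_iff.mpr h0)]
  apply lt_of_pow_lt_pow_left₀ 2 (norm_nonneg _)
  have ha2 : ‖a‖ ^ 2 < 1 := by nlinarith [norm_nonneg a]
  have hz2 : ‖z‖ ^ 2 < 1 := by nlinarith [norm_nonneg z]
  -- `|1 - conj a z|² - |a - z|² = (1 - |a|²) (1 - |z|²)`
  have key := mul_pos (sub_pos.mpr ha2) (sub_pos.mpr hz2)
  simp only [← Complex.normSq_eq_norm_sq, Complex.normSq_apply, Complex.sub_re, Complex.sub_im,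
    Complex.mul_re, Complex.mul_im, Complex.one_re, Complex.one_im, Complex.conj_re,
    Complex.conj_im] at key ⊢
  nlinarith [key]

lemma IsH2Rep.add {f g : ℂ → ℂ} {c d : ℕ → ℂ} (hf : IsH2Rep f c) (hg : IsH2Rep g d) :
    IsH2Rep (fun z => f z + g z) (fun n => c n + d n) := by
  refine ⟨?_, fun z hz => ?_⟩
  · refine Summable.of_nonneg_of_le (fun n => by positivity) (fun n => ?_)
      ((hf.1.mul_left 2).add (hg.1.mul_left 2))
    nlinarith [norm_add_le (c n) (d n), norm_nonneg (c n + d n), sq_nonneg (‖c n‖ - ‖d n‖)]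
  · simpa only [add_mul] using (hf.2 z hz).add (hg.2 z hz)

lemma IsH2Rep.const_mul {f : ℂ → ℂ} {c : ℕ → ℂ} (k : ℂ) (hf : IsH2Rep f c) :
    IsH2Rep (fun z => k * f z) (fun n => k * c n) := by
  refine ⟨?_, fun z hz => ?_⟩
  · simpa only [norm_mul, mul_pow] using hf.1.mul_left (‖k‖ ^ 2)
  · simpa only [mul_assoc] using (hf.2 z hz).mul_left k

/-- The Taylor coefficients of `z ↦ z f(z)`, where `c` are those of `f`. -/
def shiftSeq (c : ℕ → ℂ) : ℕ → ℂ
  | 0 => 0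
  | n + 1 => c n

lemma IsH2Rep.shift {f : ℂ → ℂ} {c : ℕ → ℂ} (hf : IsH2Rep f c) :
    IsH2Rep (fun z => z * f z) (shiftSeq c) := by
  refine ⟨?_, fun z hz => ?_⟩
  · rw [← summable_nat_add_iff 1]
    exact hf.1
  · rw [← hasSum_nat_add_iff' 1]
    simpa [shiftSeq, pow_succ', mul_left_comm] using (hf.2 z hz).mul_left z

/-- The reproducing kernel at `conj v`, namely `1 / (1 - v z)`. -/
lemma isH2Rep_kernel {v : ℂ} (hv : ‖v‖ < 1) :
    IsH2Rep (fun z => (1 - v * z)⁻¹) (fun n => v ^ n) := by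
  refine ⟨?_, fun z hz => ?_⟩
  · have : ‖v‖ ^ 2 < 1 := by nlinarith [norm_nonneg v]
    simpa only [norm_pow, ← pow_mul, mul_comm] using
      summable_geometric_of_lt_one (by positivity) this
  · simp only [← mul_pow]
    apply hasSum_geometric_of_norm_lt_one
    rw [norm_mul]
    nlinarith [norm_nonneg v, norm_nonneg z]

/-- `∑ c (n + 1) u ^ n` converges; its sum is the difference quotient `(f u - c 0) / u`. -/
lemma IsH2Rep.exists_hasSum_shift {f : ℂ → ℂ} {c : ℕ → ℂ} (hf : IsH2Rep f c) {u : ℂ}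
    (hu : ‖u‖ < 1) :
    ∃ m, HasSum (fun n => c n * shiftSeq (fun k => u ^ k) n) m ∧ u * m = f u - c 0 := by
  have hs : Summable (fun n => c (n + 1) * u ^ n) := by
    refine Summable.of_norm_bounded (((summable_nat_add_iff 1).mpr hf.1).add
      (isH2Rep_kernel hu).1) (fun n => ?_)
    rw [norm_mul]
    nlinarith [sq_nonneg (‖c (n + 1)‖ - ‖u ^ n‖), sq_nonneg ‖c (n + 1)‖, sq_nonneg ‖u ^ n‖]
  obtain ⟨m, hm⟩ := hs
  refine ⟨m, ?_, ?_⟩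
  · rw [← hasSum_nat_add_iff' 1]
    simpa [shiftSeq] using hm
  · have h1 := (hasSum_nat_add_iff' 1).mpr (hf.2 u hu)
    have h2 := hm.mul_left u
    refine h2.unique ?_
    simpa [pow_succ', mul_left_comm] using h1

/-- `1 - conj w · φ_a(z)` in terms of `u = φ_a(w)`. -/
lemma one_sub_conj_mul_phi {a w z : ℂ} (ha : ‖a‖ < 1) (hw : ‖w‖ < 1) (hz : ‖z‖ < 1) :
    (1 - conj w * phi a z) * (1 - conj a * z) =
      (1 - conj w * a) * (1 - conj (phi a w) * z) := by
  have h1 := one_sub_conj_mul_ne_zero ha hz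
  have h2 := one_sub_conj_mul_ne_zero hw ha
  have h3 : 1 - a * conj w ≠ 0 := by rwa [mul_comm]
  have h4 : 1 - z * conj a ≠ 0 := by rwa [mul_comm]
  simp only [phi, map_div₀, map_sub, map_mul, map_one, Complex.conj_conj]
  field_simp
  ring

lemma phi_phi {a z : ℂ} (ha : ‖a‖ < 1) (hz : ‖z‖ < 1) : phi a (phi a z) = z := by
  have h1 := one_sub_conj_mul_ne_zero ha hz
  have h2 := one_sub_conj_mul_ne_zero ha ha
  have h1' : 1 - z * conj a ≠ 0 := by rwa [mul_comm]
  have h2' : 1 - a * conj a ≠ 0 := by rwa [mul_comm]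
  have h3 : 1 - conj a * phi a z = (1 - conj a * a) / (1 - conj a * z) := by
    rw [phi]; field_simp; ring
  have h4 : a - phi a z = z * (1 - conj a * a) / (1 - conj a * z) := by
    rw [phi]; field_simp; ring
  rw [phi, h3, h4]
  field_simp

/-- For `a ≠ 0` in the open unit disk: if `f ∈ H²` satisfies `f ∘ φ_a = −f` and is
orthogonal (in the H² inner product, computed via Taylor coefficients) to every
`g ∈ H²` with `g ∘ φ_a = g`, then `f = 0`:
`N(C_a + 1) ∩ N(C_a − 1)^⊥ = {0}`. -/
theorem stmt16 (a : ℂ) (ha : ‖a‖ < 1) (ha0 : a ≠ 0)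
    (f : ℂ → ℂ) (c : ℕ → ℂ) (hf : IsH2Rep f c)
    (hfa : ∀ z : ℂ, ‖z‖ < 1 → f (phi a z) = - f z)
    (horth : ∀ (g : ℂ → ℂ) (d : ℕ → ℂ), IsH2Rep g d →
      (∀ z : ℂ, ‖z‖ < 1 → g (phi a z) = g z) →
      (∑' n, c n * (starRingEnd ℂ) (d n)) = 0) :
    ∀ z : ℂ, ‖z‖ < 1 → f z = 0 := by
  have hc0 : c 0 = 0 := by
    have h := horth (fun z => (1 - 0 * z)⁻¹) (fun n => 0 ^ n) (isH2Rep_kernel (by simp))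
      (by simp)
    rw [tsum_eq_single 0 (fun n hn => by simp [hn])] at h
    simpa using h
  intro w hw
  have hu : ‖phi a w‖ < 1 := norm_phi_lt_one ha hw
  have hfu := hfa w hw
  have hker : ∀ z : ℂ, ‖z‖ < 1 → (1 - conj w * phi a z) * (1 - conj a * z) =
      (1 - conj w * a) * (1 - conj (phi a w) * z) :=
    fun z hz => one_sub_conj_mul_phi ha hw hz
  generalize phi a w = u at hu hfu hker
  have hw' : ‖conj w‖ < 1 := by rwa [RCLike.norm_conj]
  have hu' : ‖conj u‖ < 1 := by rwa [RCLike.norm_conj]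
  have hrep := ((isH2Rep_kernel hw').const_mul (1 - conj w * a)).add
    ((isH2Rep_kernel hu').add ((isH2Rep_kernel hu').shift.const_mul (-conj a)))
  -- the two summands of the test function are exchanged by `φ_a`
  have hswap : ∀ z : ℂ, ‖z‖ < 1 →
      (1 - conj w * a) * (1 - conj w * phi a z)⁻¹ = (1 - conj a * z) * (1 - conj u * z)⁻¹ := by
    intro z hz
    have h1 := one_sub_conj_mul_ne_zero hw (norm_phi_lt_one ha hz)
    have h2 := one_sub_conj_mul_ne_zero hu hz
    rw [← div_eq_mul_inv, ← div_eq_mul_inv, div_eq_div_iff h1 h2, ← hker z hz, mul_comm]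
  have h := horth _ _ hrep (fun z hz => by
    have e1 := hswap z hz
    have e2 := hswap (phi a z) (norm_phi_lt_one ha hz)
    rw [phi_phi ha hz] at e2
    linear_combination e1 - e2)
  obtain ⟨m, hm, hum⟩ := hf.exists_hasSum_shift hu
  have hsum := ((hf.2 w hw).mul_left (1 - conj a * w)).add
    ((hf.2 u hu).add (hm.mul_left (-a)))
  have hsum0 : (1 - conj a * w) * f w + (f u + -a * m) = 0 := by
    rw [← hsum.tsum_eq, ← h]
    congr 1
    ext n
    cases n <;> simp [shiftSeq] <;> ring
  rw [hc0, sub_zero] at hum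
  have hfac : m * (conj a * (w * u) - a) = 0 := by
    linear_combination hsum0 + (conj a * w) * hum - (1 - conj a * w) * hfu
  have hne : conj a * (w * u) - a ≠ 0 := by
    intro h0
    have h1 : ‖a‖ * (‖w‖ * ‖u‖) = ‖a‖ := by
      rw [← norm_mul w, ← RCLike.norm_conj a, ← norm_mul, sub_eq_zero.mp h0, RCLike.norm_conj]
    have h2 : ‖w‖ * ‖u‖ = 1 := mul_left_cancel₀ (norm_ne_zero_iff.mpr ha0) (by rw [h1, mul_one])
    nlinarith [norm_nonneg w, norm_nonneg u]
  have hm0 : m = 0 := (mul_eq_zero.mp hfac).resolve_right hne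
  rw [hm0, mul_zero] at hum
  linear_combination hfu + hum
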